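/- arXiv:2301.11415 — 6 statements merged into one kernel-verified Lean document; each statement's English description precedes it below -/
import Mathlib

section
/- Let T be the optimal Bellman operator (T V)(x) = min_{a ∈ A} ρ_x(ω ↦ c(x,a,ω) + γ·V(g(x,a,ω))) where A is a finite nonempty action set and each ρ_x is monotone and translation invariant. Then T is a γ-contraction in the supremum norm: for any two bounded functions V, V' : X → ℝ, sup_{x ∈ X} |(T V)(x) − (T V')(x)| ≤ γ · sup_{x ∈ X} |V(x) − V'(x)|. -/
/-- The optimal Bellman operator
`(T V)(x) = min_{a ∈ A} ρ_x(ω ↦ c(x,a,ω) + γ·V(g(x,a,ω)))` over a finite nonempty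
action set, with each `ρ_x` monotone and translation invariant, is a
`γ`-contraction in the supremum norm. -/
theorem optimal_bellman_contraction {X Ω A : Type*} [Nonempty X] [Nonempty Ω]
    [Fintype A] [Nonempty A]
    (g : X → A → Ω → X) (c : X → A → Ω → ℝ) (hc : ∃ M, ∀ x a ω, |c x a ω| ≤ M)
    (γ : ℝ) (hγ0 : 0 ≤ γ) (hγ1 : γ < 1)
    (ρ : X → (Ω → ℝ) → ℝ)
    (hρmono : ∀ (x : X) (Z Z' : Ω → ℝ), (∀ ω, Z ω ≤ Z' ω) → ρ x Z ≤ ρ x Z')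
    (hρtrans : ∀ (x : X) (Z : Ω → ℝ) (r : ℝ), ρ x (fun ω => Z ω + r) = ρ x Z + r)
    (V V' : X → ℝ)
    (hV : ∃ M, ∀ x, |V x| ≤ M) (hV' : ∃ M, ∀ x, |V' x| ≤ M) :
    (⨆ x, |(⨅ a : A, ρ x (fun ω => c x a ω + γ * V (g x a ω))) -
        ⨅ a : A, ρ x (fun ω => c x a ω + γ * V' (g x a ω))|) ≤
      γ * ⨆ x, |V x - V' x| := by
  obtain ⟨M, hM⟩ := hV
  obtain ⟨M', hM'⟩ := hV'
  have hb : BddAbove (Set.range fun x => |V x - V' x|) := by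
    refine ⟨M + M', ?_⟩
    rintro _ ⟨x, rfl⟩
    exact (abs_sub _ _).trans (add_le_add (hM x) (hM' x))
  have hle : ∀ x, |V x - V' x| ≤ ⨆ x, |V x - V' x| := fun x => le_ciSup hb x
  generalize (⨆ x, |V x - V' x|) = D at hle ⊢
  have key : ∀ (U W : X → ℝ), (∀ x, U x ≤ W x + D) → ∀ x,
      (⨅ a : A, ρ x (fun ω => c x a ω + γ * U (g x a ω))) ≤
      (⨅ a : A, ρ x (fun ω => c x a ω + γ * W (g x a ω))) + γ * D := by
    intro U W h x
    rw [← sub_le_iff_le_add]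
    refine le_ciInf fun a => ?_
    rw [sub_le_iff_le_add]
    refine (ciInf_le (Set.finite_range _).bddBelow a).trans ?_
    rw [← hρtrans]
    refine hρmono _ _ _ fun ω => ?_
    have := mul_le_mul_of_nonneg_left (h (g x a ω)) hγ0
    linarith
  refine ciSup_le fun x => ?_
  rw [abs_sub_le_iff]
  constructor
  · have := key V V' (fun y => by linarith [(abs_le.1 (hle y)).2]) x
    linarith
  · have := key V' V (fun y => by linarith [(abs_le.1 (hle y)).1]) x
    linarith
end

section
/- The Bellman operator T of the infinite-horizon Bayesian risk MDP with CVaR risk measure, defined on bounded functions V : S × Δ(Θ) → ℝ by (T V)(s,μ) = min_{a ∈ A} ρ_μ(θ ↦ Σ_ξ f(θ,ξ)·(C(s,a,ξ) + γ·V(g(s,a,ξ), B(μ,ξ)))), maps bounded functions to bounded functions, is a γ-contraction in the supremum norm, and admits a unique bounded fixed point V* (the optimal value function), satisfying V* = T V*. -/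
open scoped BigOperators

noncomputable section

/-- Membership in the probability simplex `Δ(Θ)`. -/
def InSimplex {Θ : Type*} [Fintype Θ] (μ : Θ → ℝ) : Prop :=
  (∀ θ, 0 ≤ μ θ) ∧ ∑ θ, μ θ = 1

/-- Bayes update `B(μ,ξ)` of a belief `μ` after observing `ξ`, under the
parametric likelihood `f`; it is `μ` itself when the normalizing constant
is not positive. -/
def bayesUpdate {Θ Ξ : Type*} [Fintype Θ] (f : Θ → Ξ → ℝ)
    (μ : Θ → ℝ) (ξ : Ξ) : Θ → ℝ := by
  classical
  exact if 0 < ∑ θ', μ θ' * f θ' ξ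
    then fun θ => μ θ * f θ ξ / ∑ θ', μ θ' * f θ' ξ
    else μ

/-- The CVaR risk functional at level `α` of `Z : Θ → ℝ` under belief `μ`,
via the Rockafellar–Uryasev formula. -/
def cvarRisk {Θ : Type*} [Fintype Θ] (α : ℝ) (μ : Θ → ℝ) (Z : Θ → ℝ) : ℝ :=
  ⨅ φ : ℝ, φ + (1 - α)⁻¹ * ∑ θ, μ θ * max (Z θ - φ) 0

/-- The optimal Bellman operator of the infinite-horizon Bayesian risk MDP
with CVaR risk measure. -/
def brBellman {S A Θ Ξ : Type*} [Fintype Θ] [Fintype Ξ] [Fintype A] [Nonempty A]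
    (f : Θ → Ξ → ℝ) (g : S → A → Ξ → S) (C : S → A → Ξ → ℝ) (γ α : ℝ)
    (V : S → (Θ → ℝ) → ℝ) : S → (Θ → ℝ) → ℝ :=
  fun s μ => ⨅ a : A, cvarRisk α μ (fun θ =>
    ∑ ξ, f θ ξ * (C s a ξ + γ * V (g s a ξ) (bayesUpdate f μ ξ)))

theorem bayes_mem {Θ Ξ : Type*} [Fintype Θ] (f : Θ → Ξ → ℝ) (hf0 : ∀ θ ξ, 0 ≤ f θ ξ)
    (μ : Θ → ℝ) (hμ : InSimplex μ) (ξ : Ξ) : InSimplex (bayesUpdate f μ ξ) := by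
  unfold bayesUpdate
  split_ifs with h
  · refine ⟨fun θ => div_nonneg (mul_nonneg (hμ.1 θ) (hf0 θ ξ)) h.le, ?_⟩
    rw [← Finset.sum_div]
    exact div_self h.ne'
  · exact hμ

theorem cvar_term_ge {Θ : Type*} [Fintype Θ] (α : ℝ) (hα0 : 0 ≤ α) (hα1 : α < 1)
    (μ : Θ → ℝ) (hμ : InSimplex μ) (Z : Θ → ℝ) (φ : ℝ) :
    ∑ θ, μ θ * Z θ ≤ φ + (1 - α)⁻¹ * ∑ θ, μ θ * max (Z θ - φ) 0 := by
  have h1 : 1 ≤ (1 - α)⁻¹ := (one_le_inv₀ (by linarith)).2 (by linarith)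
  have h0 : 0 ≤ ∑ θ, μ θ * max (Z θ - φ) 0 :=
    Finset.sum_nonneg fun θ _ => mul_nonneg (hμ.1 θ) (le_max_right _ _)
  have h2 : ∑ θ, μ θ * (Z θ - φ) ≤ ∑ θ, μ θ * max (Z θ - φ) 0 :=
    Finset.sum_le_sum fun θ _ => mul_le_mul_of_nonneg_left (le_max_left _ _) (hμ.1 θ)
  have h3 : ∑ θ, μ θ * (Z θ - φ) = ∑ θ, μ θ * Z θ - φ := by
    simp only [mul_sub, Finset.sum_sub_distrib, ← Finset.sum_mul, hμ.2, one_mul]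
  nlinarith

theorem cvar_le_term {Θ : Type*} [Fintype Θ] (α : ℝ) (hα0 : 0 ≤ α) (hα1 : α < 1)
    (μ : Θ → ℝ) (hμ : InSimplex μ) (Z : Θ → ℝ) (φ : ℝ) :
    cvarRisk α μ Z ≤ φ + (1 - α)⁻¹ * ∑ θ, μ θ * max (Z θ - φ) 0 := by
  refine ciInf_le (f := fun φ : ℝ => φ + (1 - α)⁻¹ * ∑ θ, μ θ * max (Z θ - φ) 0) ?_ φ
  refine ⟨∑ θ, μ θ * Z θ, ?_⟩
  rintro _ ⟨φ, rfl⟩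
  exact cvar_term_ge α hα0 hα1 μ hμ Z φ

theorem cvar_shift {Θ : Type*} [Fintype Θ] (α : ℝ) (hα0 : 0 ≤ α) (hα1 : α < 1)
    (μ : Θ → ℝ) (hμ : InSimplex μ) (Z Z' : Θ → ℝ) (d : ℝ) (h : ∀ θ, Z θ ≤ Z' θ + d) :
    cvarRisk α μ Z ≤ cvarRisk α μ Z' + d := by
  rw [← sub_le_iff_le_add]
  refine le_ciInf fun φ => ?_
  have h1 := cvar_le_term α hα0 hα1 μ hμ Z (φ + d)
  have hk : 0 ≤ (1 - α)⁻¹ := inv_nonneg.2 (by linarith)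
  have h2 : ∑ θ, μ θ * max (Z θ - (φ + d)) 0 ≤ ∑ θ, μ θ * max (Z' θ - φ) 0 :=
    Finset.sum_le_sum fun θ _ => mul_le_mul_of_nonneg_left
      (max_le_max (by linarith [h θ]) le_rfl) (hμ.1 θ)
  have h3 := mul_le_mul_of_nonneg_left h2 hk
  linarith

theorem cvar_abs {Θ : Type*} [Fintype Θ] (α : ℝ) (hα0 : 0 ≤ α) (hα1 : α < 1)
    (μ : Θ → ℝ) (hμ : InSimplex μ) (Z : Θ → ℝ) (d : ℝ) (h : ∀ θ, |Z θ| ≤ d) :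
    |cvarRisk α μ Z| ≤ d := by
  rw [abs_le]
  constructor
  · refine le_ciInf fun φ => le_trans ?_ (cvar_term_ge α hα0 hα1 μ hμ Z φ)
    have : ∑ θ, μ θ * (-d) ≤ ∑ θ, μ θ * Z θ :=
      Finset.sum_le_sum fun θ _ => mul_le_mul_of_nonneg_left (abs_le.1 (h θ)).1 (hμ.1 θ)
    rwa [← Finset.sum_mul, hμ.2, one_mul] at this
  · have h1 := cvar_le_term α hα0 hα1 μ hμ Z d
    have h2 : ∑ θ, μ θ * max (Z θ - d) 0 = 0 := Finset.sum_eq_zero fun θ _ => by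
      rw [max_eq_right (by linarith [(abs_le.1 (h θ)).2]), mul_zero]
    rw [h2] at h1
    linarith

section
variable {S A Θ Ξ : Type*} [Fintype A] [Nonempty A] [Fintype Θ] [Fintype Ξ]
    (f : Θ → Ξ → ℝ) (hf0 : ∀ θ ξ, 0 ≤ f θ ξ) (hf1 : ∀ θ, ∑ ξ, f θ ξ = 1)
    (g : S → A → Ξ → S) (C : S → A → Ξ → ℝ)
    (γ : ℝ) (hγ0 : 0 ≤ γ) (α : ℝ) (hα0 : 0 ≤ α) (hα1 : α < 1)
include hf0 hf1 hγ0 hα0 hα1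

theorem bell_shift (V V' : S → (Θ → ℝ) → ℝ) (d : ℝ)
    (h : ∀ s μ, InSimplex μ → V s μ ≤ V' s μ + d) (s : S) (μ : Θ → ℝ) (hμ : InSimplex μ) :
    brBellman f g C γ α V s μ ≤ brBellman f g C γ α V' s μ + γ * d := by
  rw [← sub_le_iff_le_add]
  refine le_ciInf fun a => ?_
  rw [sub_le_iff_le_add]
  refine (ciInf_le (Set.finite_range _).bddBelow a).trans ?_
  refine cvar_shift α hα0 hα1 μ hμ _ _ _ fun θ => ?_
  have : γ * d = ∑ ξ, f θ ξ * (γ * d) := by rw [← Finset.sum_mul, hf1, one_mul]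
  rw [this, ← Finset.sum_add_distrib]
  refine Finset.sum_le_sum fun ξ _ => ?_
  rw [← mul_add]
  refine mul_le_mul_of_nonneg_left ?_ (hf0 θ ξ)
  have := mul_le_mul_of_nonneg_left (h (g s a ξ) _ (bayes_mem f hf0 μ hμ ξ)) hγ0
  linarith

theorem bell_lip (V V' : S → (Θ → ℝ) → ℝ) (d : ℝ)
    (h : ∀ s μ, InSimplex μ → |V s μ - V' s μ| ≤ d) (s : S) (μ : Θ → ℝ) (hμ : InSimplex μ) :
    |brBellman f g C γ α V s μ - brBellman f g C γ α V' s μ| ≤ γ * d := by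
  have h1 := bell_shift f hf0 hf1 g C γ hγ0 α hα0 hα1 V V' d
    (fun s μ hμ => by linarith [(abs_le.1 (h s μ hμ)).2]) s μ hμ
  have h2 := bell_shift f hf0 hf1 g C γ hγ0 α hα0 hα1 V' V d
    (fun s μ hμ => by linarith [(abs_le.1 (h s μ hμ)).1]) s μ hμ
  rw [abs_le]
  constructor <;> linarith

theorem bell_bdd [Finite S] (V : S → (Θ → ℝ) → ℝ) (hV : ∃ M, ∀ s μ, InSimplex μ → |V s μ| ≤ M) :
    ∃ M, ∀ s μ, InSimplex μ → |brBellman f g C γ α V s μ| ≤ M := by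
  obtain ⟨M, hM⟩ := hV
  obtain ⟨K, hK⟩ := (Set.finite_range fun p : S × A × Ξ => |C p.1 p.2.1 p.2.2|).bddAbove
  refine ⟨K + γ * M, fun s μ hμ => ?_⟩
  have key : ∀ a, |cvarRisk α μ (fun θ =>
      ∑ ξ, f θ ξ * (C s a ξ + γ * V (g s a ξ) (bayesUpdate f μ ξ)))| ≤ K + γ * M := by
    intro a
    refine cvar_abs α hα0 hα1 μ hμ _ _ fun θ => ?_
    refine (Finset.abs_sum_le_sum_abs _ _).trans ?_
    have : K + γ * M = ∑ ξ, f θ ξ * (K + γ * M) := by rw [← Finset.sum_mul, hf1, one_mul]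
    rw [this]
    refine Finset.sum_le_sum fun ξ _ => ?_
    rw [abs_mul, abs_of_nonneg (hf0 θ ξ)]
    refine mul_le_mul_of_nonneg_left ((abs_add_le _ _).trans (add_le_add ?_ ?_)) (hf0 θ ξ)
    · exact hK ⟨(s, a, ξ), rfl⟩
    · rw [abs_mul, abs_of_nonneg hγ0]
      exact mul_le_mul_of_nonneg_left (hM _ _ (bayes_mem f hf0 μ hμ ξ)) hγ0
  rw [abs_le]
  refine ⟨le_ciInf fun a => (abs_le.1 (key a)).1, ?_⟩
  obtain ⟨a⟩ := ‹Nonempty A›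
  exact (ciInf_le (Set.finite_range _).bddBelow a).trans (abs_le.1 (key a)).2

end

/-- The Bellman operator of the infinite-horizon Bayesian risk MDP
with CVaR risk measure maps bounded functions to bounded functions, is a
`γ`-contraction in the supremum norm over `S × Δ(Θ)`, and admits a unique
bounded fixed point `V*` (the optimal value function). -/
theorem brBellman_contraction_unique_fixed_point
    {S A Θ Ξ : Type*} [Fintype S] [Nonempty S] [Fintype A] [Nonempty A]
    [Fintype Θ] [Nonempty Θ] [Fintype Ξ] [Nonempty Ξ]
    (f : Θ → Ξ → ℝ) (hf0 : ∀ θ ξ, 0 ≤ f θ ξ) (hf1 : ∀ θ, ∑ ξ, f θ ξ = 1)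
    (g : S → A → Ξ → S) (C : S → A → Ξ → ℝ)
    (γ : ℝ) (hγ0 : 0 ≤ γ) (hγ1 : γ < 1)
    (α : ℝ) (hα0 : 0 ≤ α) (hα1 : α < 1) :
    (∀ V : S → (Θ → ℝ) → ℝ,
        (∃ M, ∀ s μ, InSimplex μ → |V s μ| ≤ M) →
        ∃ M, ∀ s μ, InSimplex μ → |brBellman f g C γ α V s μ| ≤ M) ∧
    (∀ V V' : S → (Θ → ℝ) → ℝ,
        (∃ M, ∀ s μ, InSimplex μ → |V s μ| ≤ M) →
        (∃ M, ∀ s μ, InSimplex μ → |V' s μ| ≤ M) →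
        (⨆ s, ⨆ μ : {μ : Θ → ℝ // InSimplex μ},
            |brBellman f g C γ α V s μ.1 - brBellman f g C γ α V' s μ.1|) ≤
          γ * ⨆ s, ⨆ μ : {μ : Θ → ℝ // InSimplex μ}, |V s μ.1 - V' s μ.1|) ∧
    (∃ Vstar : S → (Θ → ℝ) → ℝ,
        (∃ M, ∀ s μ, InSimplex μ → |Vstar s μ| ≤ M) ∧
        (∀ s μ, InSimplex μ → brBellman f g C γ α Vstar s μ = Vstar s μ) ∧
        (∀ V : S → (Θ → ℝ) → ℝ,
          (∃ M, ∀ s μ, InSimplex μ → |V s μ| ≤ M) →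
          (∀ s μ, InSimplex μ → brBellman f g C γ α V s μ = V s μ) →
          ∀ s μ, InSimplex μ → V s μ = Vstar s μ)) := by
  have lip := bell_lip f hf0 hf1 g C γ hγ0 α hα0 hα1
  have bdd := bell_bdd f hf0 hf1 g C γ hγ0 α hα0 hα1
  refine ⟨bdd, ?_, ?_⟩
  · rintro V V' ⟨M, hM⟩ ⟨M', hM'⟩
    have hb : ∀ s μ, InSimplex μ → |V s μ - V' s μ| ≤ M + M' := fun s μ hμ =>
      (abs_sub _ _).trans (add_le_add (hM s μ hμ) (hM' s μ hμ))
    have hd : ∀ s μ, InSimplex μ → |V s μ - V' s μ| ≤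
        ⨆ s, ⨆ μ : {μ : Θ → ℝ // InSimplex μ}, |V s μ.1 - V' s μ.1| := by
      intro s μ hμ
      refine le_trans ?_ (le_ciSup (f := fun s => ⨆ μ : {μ : Θ → ℝ // InSimplex μ},
        |V s μ.1 - V' s μ.1|) (Set.finite_range _).bddAbove s)
      refine le_ciSup (f := fun μ : {μ : Θ → ℝ // InSimplex μ} => |V s μ.1 - V' s μ.1|)
        ⟨M + M', ?_⟩ ⟨μ, hμ⟩
      rintro _ ⟨ν, rfl⟩
      exact hb s ν.1 ν.2
    have h0 : 0 ≤ γ * ⨆ s, ⨆ μ : {μ : Θ → ℝ // InSimplex μ}, |V s μ.1 - V' s μ.1| :=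
      mul_nonneg hγ0 (Real.iSup_nonneg fun s => Real.iSup_nonneg fun μ => abs_nonneg _)
    exact Real.iSup_le (fun s => Real.iSup_le (fun μ => lip V V' _ hd s μ.1 μ.2) h0) h0
  · let W : ℕ → S → (Θ → ℝ) → ℝ := fun n => (brBellman f g C γ α)^[n] (fun _ _ => 0)
    have hW : ∀ n, W (n + 1) = brBellman f g C γ α (W n) := fun n =>
      Function.iterate_succ_apply' _ _ _
    have hW0 : ∀ s μ, W 0 s μ = 0 := fun _ _ => rfl
    obtain ⟨M, hM⟩ := bdd (W 0) ⟨0, fun s μ _ => by rw [hW0, abs_zero]⟩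
    have hstep : ∀ n s μ, InSimplex μ → |W n s μ - W (n + 1) s μ| ≤ M * γ ^ n := by
      intro n
      induction n with
      | zero =>
        intro s μ hμ
        rw [hW0, hW, zero_sub, abs_neg, pow_zero, mul_one]
        exact hM s μ hμ
      | succ n ih =>
        intro s μ hμ
        have := lip _ _ _ ih s μ hμ
        rw [← hW, ← hW] at this
        rw [pow_succ]
        linarith
    have hex : ∀ s μ, ∃ l, InSimplex μ → Filter.Tendsto (fun n => W n s μ) Filter.atTop (nhds l) := by
      intro s μ
      by_cases hμ : InSimplex μ
      · obtain ⟨l, hl⟩ := cauchySeq_tendsto_of_complete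
          (cauchySeq_of_le_geometric γ M hγ1 (f := fun n => W n s μ) (fun n => hstep n s μ hμ))
        exact ⟨l, fun _ => hl⟩
      · exact ⟨0, fun h => absurd h hμ⟩
    choose Vs hVs using hex
    have hrate : ∀ n s μ, InSimplex μ → |W n s μ - Vs s μ| ≤ M * γ ^ n / (1 - γ) := fun n s μ hμ =>
      dist_le_of_le_geometric_of_tendsto γ M hγ1 (f := fun n => W n s μ)
        (fun n => hstep n s μ hμ) (hVs s μ hμ) n
    have hpow : ∀ D : ℝ, Filter.Tendsto (fun n : ℕ => D * γ ^ n) Filter.atTop (nhds 0) := fun D => by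
      simpa using (tendsto_pow_atTop_nhds_zero_of_lt_one hγ0 hγ1).const_mul D
    have hfix : ∀ s μ, InSimplex μ → brBellman f g C γ α Vs s μ = Vs s μ := by
      intro s μ hμ
      have h1 : Filter.Tendsto (fun n => W (n + 1) s μ) Filter.atTop
          (nhds (brBellman f g C γ α Vs s μ)) := by
        rw [tendsto_iff_dist_tendsto_zero]
        refine squeeze_zero (fun _ => dist_nonneg) (fun n => ?_) (hpow (γ * M / (1 - γ)))
        have := lip _ _ _ (hrate n) s μ hμ
        rw [← hW] at this
        rw [Real.dist_eq]
        exact this.trans (le_of_eq (by ring))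
      exact tendsto_nhds_unique h1 ((Filter.tendsto_add_atTop_iff_nat 1).2 (hVs s μ hμ))
    have hVb : ∀ s μ, InSimplex μ → |Vs s μ| ≤ M / (1 - γ) := fun s μ hμ => by
      simpa [hW0] using hrate 0 s μ hμ
    refine ⟨Vs, ⟨_, hVb⟩, hfix, ?_⟩
    rintro V ⟨M', hM'⟩ hV s μ hμ
    have hn : ∀ n s μ, InSimplex μ → |V s μ - Vs s μ| ≤ (M' + M / (1 - γ)) * γ ^ n := by
      intro n
      induction n with
      | zero =>
        intro s μ hμ
        rw [pow_zero, mul_one]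
        exact (abs_sub _ _).trans (add_le_add (hM' s μ hμ) (hVb s μ hμ))
      | succ n ih =>
        intro s μ hμ
        have := lip _ _ _ ih s μ hμ
        rw [hV s μ hμ, hfix s μ hμ] at this
        exact this.trans (le_of_eq (by ring))
    have := ge_of_tendsto' (hpow (M' + M / (1 - γ))) (fun n => hn n s μ hμ)
    exact sub_eq_zero.1 (abs_eq_zero.1 (le_antisymm this (abs_nonneg _)))

end
end

section
/- The policy-evaluation Bellman operator T^π of the infinite-horizon Bayesian risk MDP with CVaR risk measure under a stationary policy π : S × Δ(Θ) → A, defined on bounded functions V : S × Δ(Θ) → ℝ by (T^π V)(s,μ) = ρ_μ(θ ↦ Σ_ξ f(θ,ξ)·(C(s,π(s,μ),ξ) + γ·V(g(s,π(s,μ),ξ), B(μ,ξ)))), is a γ-contraction in the supremum norm and admits a unique bounded fixed point V^π (the value of the stationary policy π). -/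
open scoped BigOperators

noncomputable section

/-- The policy-evaluation Bellman operator of the infinite-horizon Bayesian
risk MDP with CVaR risk measure under a stationary policy `π`. -/
def brPolicyBellman {S A Θ Ξ : Type*} [Fintype Θ] [Fintype Ξ]
    (f : Θ → Ξ → ℝ) (g : S → A → Ξ → S) (C : S → A → Ξ → ℝ) (γ α : ℝ)
    (π : S → (Θ → ℝ) → A)
    (V : S → (Θ → ℝ) → ℝ) : S → (Θ → ℝ) → ℝ :=
  fun s μ => cvarRisk α μ (fun θ =>
    ∑ ξ, f θ ξ * (C s (π s μ) ξ + γ * V (g s (π s μ) ξ) (bayesUpdate f μ ξ)))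

lemma cvar_aux_lower {Θ : Type*} [Fintype Θ] {α : ℝ} (hα0 : 0 ≤ α) (hα1 : α < 1)
    {μ : Θ → ℝ} (hμ : InSimplex μ) (Z : Θ → ℝ) (φ : ℝ) :
    ∑ θ, μ θ * Z θ ≤ φ + (1 - α)⁻¹ * ∑ θ, μ θ * max (Z θ - φ) 0 := by
  have hk : 1 ≤ (1 - α)⁻¹ := (one_le_inv₀ (by linarith)).2 (by linarith)
  have h0 : 0 ≤ ∑ θ, μ θ * max (Z θ - φ) 0 :=
    Finset.sum_nonneg fun θ _ => mul_nonneg (hμ.1 θ) (le_max_right _ _)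
  have h1 : ∑ θ, μ θ * (Z θ - φ) ≤ ∑ θ, μ θ * max (Z θ - φ) 0 :=
    Finset.sum_le_sum fun θ _ => mul_le_mul_of_nonneg_left (le_max_left _ _) (hμ.1 θ)
  have h2 : ∑ θ, μ θ * (Z θ - φ) = ∑ θ, μ θ * Z θ - φ := by
    simp only [mul_sub, Finset.sum_sub_distrib, ← Finset.sum_mul, hμ.2, one_mul]
  nlinarith

lemma cvar_aux_bdd {Θ : Type*} [Fintype Θ] {α : ℝ} (hα0 : 0 ≤ α) (hα1 : α < 1)
    {μ : Θ → ℝ} (hμ : InSimplex μ) (Z : Θ → ℝ) :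
    BddBelow (Set.range fun φ : ℝ => φ + (1 - α)⁻¹ * ∑ θ, μ θ * max (Z θ - φ) 0) := by
  refine ⟨∑ θ, μ θ * Z θ, ?_⟩
  rintro _ ⟨φ, rfl⟩
  exact cvar_aux_lower hα0 hα1 hμ Z φ

lemma cvar_aux_mono {Θ : Type*} [Fintype Θ] {α : ℝ} (hα0 : 0 ≤ α) (hα1 : α < 1)
    {μ : Θ → ℝ} (hμ : InSimplex μ) (Z Z' : Θ → ℝ) (c : ℝ) (h : ∀ θ, Z θ ≤ Z' θ + c) :
    cvarRisk α μ Z ≤ cvarRisk α μ Z' + c := by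
  rw [← sub_le_iff_le_add]
  refine le_ciInf fun φ => ?_
  rw [sub_le_iff_le_add]
  refine (ciInf_le (cvar_aux_bdd hα0 hα1 hμ Z) (φ + c)).trans ?_
  have hk : 0 ≤ (1 - α)⁻¹ := inv_nonneg.2 (by linarith)
  have h1 : ∑ θ, μ θ * max (Z θ - (φ + c)) 0 ≤ ∑ θ, μ θ * max (Z' θ - φ) 0 :=
    Finset.sum_le_sum fun θ _ => mul_le_mul_of_nonneg_left
      (max_le_max (by linarith [h θ]) le_rfl) (hμ.1 θ)
  have := mul_le_mul_of_nonneg_left h1 hk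
  linarith

lemma cvar_aux_abs {Θ : Type*} [Fintype Θ] {α : ℝ} (hα0 : 0 ≤ α) (hα1 : α < 1)
    {μ : Θ → ℝ} (hμ : InSimplex μ) (Z : Θ → ℝ) (K : ℝ) (h : ∀ θ, |Z θ| ≤ K) :
    |cvarRisk α μ Z| ≤ K := by
  rw [abs_le]
  constructor
  · refine le_ciInf fun φ => le_trans ?_ (cvar_aux_lower hα0 hα1 hμ Z φ)
    calc -K = ∑ θ, μ θ * (-K) := by rw [← Finset.sum_mul, hμ.2, one_mul]
      _ ≤ _ := Finset.sum_le_sum fun θ _ =>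
        mul_le_mul_of_nonneg_left (abs_le.1 (h θ)).1 (hμ.1 θ)
  · refine (ciInf_le (cvar_aux_bdd hα0 hα1 hμ Z) K).trans ?_
    have : ∀ θ, max (Z θ - K) 0 = 0 := fun θ =>
      max_eq_right (by linarith [(abs_le.1 (h θ)).2])
    simp [this]

lemma bayes_aux {Θ Ξ : Type*} [Fintype Θ] (f : Θ → Ξ → ℝ) (hf0 : ∀ θ ξ, 0 ≤ f θ ξ)
    {μ : Θ → ℝ} (hμ : InSimplex μ) (ξ : Ξ) : InSimplex (bayesUpdate f μ ξ) := by
  unfold bayesUpdate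
  split_ifs with h
  · refine ⟨fun θ => div_nonneg (mul_nonneg (hμ.1 θ) (hf0 θ ξ)) h.le, ?_⟩
    rw [← Finset.sum_div, div_self h.ne']
  · exact hμ

section Aux

variable {S A Θ Ξ : Type*} [Fintype Θ] [Fintype Ξ]
    (f : Θ → Ξ → ℝ) (hf0 : ∀ θ ξ, 0 ≤ f θ ξ) (hf1 : ∀ θ, ∑ ξ, f θ ξ = 1)
    (g : S → A → Ξ → S) (C : S → A → Ξ → ℝ)
    (γ : ℝ) (hγ0 : 0 ≤ γ)
    (α : ℝ) (hα0 : 0 ≤ α) (hα1 : α < 1)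
    (π : S → (Θ → ℝ) → A)

lemma bellman_aux_le (hf0 : ∀ θ ξ, 0 ≤ f θ ξ) (hf1 : ∀ θ, ∑ ξ, f θ ξ = 1)
    (hγ0 : 0 ≤ γ) (hα0 : 0 ≤ α) (hα1 : α < 1)
    (V V' : S → (Θ → ℝ) → ℝ) (D : ℝ)
    (h : ∀ s μ, InSimplex μ → V s μ ≤ V' s μ + D) (s : S) (μ : Θ → ℝ) (hμ : InSimplex μ) :
    brPolicyBellman f g C γ α π V s μ ≤ brPolicyBellman f g C γ α π V' s μ + γ * D := by
  refine cvar_aux_mono hα0 hα1 hμ _ _ _ fun θ => ?_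
  have : γ * D = ∑ ξ, f θ ξ * (γ * D) := by rw [← Finset.sum_mul, hf1, one_mul]
  rw [this, ← Finset.sum_add_distrib]
  refine Finset.sum_le_sum fun ξ _ => ?_
  rw [← mul_add]
  refine mul_le_mul_of_nonneg_left ?_ (hf0 θ ξ)
  have := mul_le_mul_of_nonneg_left (h (g s (π s μ) ξ) _ (bayes_aux f hf0 hμ ξ)) hγ0
  linarith

lemma bellman_aux_abs (hf0 : ∀ θ ξ, 0 ≤ f θ ξ) (hf1 : ∀ θ, ∑ ξ, f θ ξ = 1)
    (hγ0 : 0 ≤ γ) (hα0 : 0 ≤ α) (hα1 : α < 1)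
    (V V' : S → (Θ → ℝ) → ℝ) (D : ℝ)
    (h : ∀ s μ, InSimplex μ → |V s μ - V' s μ| ≤ D) (s : S) (μ : Θ → ℝ) (hμ : InSimplex μ) :
    |brPolicyBellman f g C γ α π V s μ - brPolicyBellman f g C γ α π V' s μ| ≤ γ * D := by
  have h1 := bellman_aux_le f g C γ α π hf0 hf1 hγ0 hα0 hα1 V V' D
    (fun s μ hμ => by linarith [(abs_le.1 (h s μ hμ)).2]) s μ hμ
  have h2 := bellman_aux_le f g C γ α π hf0 hf1 hγ0 hα0 hα1 V' V D
    (fun s μ hμ => by linarith [(abs_le.1 (h s μ hμ)).1]) s μ hμ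
  rw [abs_le]
  constructor <;> linarith

lemma bellman_aux_bdd [Fintype S] [Fintype A]
    (hf0 : ∀ θ ξ, 0 ≤ f θ ξ) (hf1 : ∀ θ, ∑ ξ, f θ ξ = 1)
    (hγ0 : 0 ≤ γ) (hα0 : 0 ≤ α) (hα1 : α < 1)
    (V : S → (Θ → ℝ) → ℝ) (hV : ∃ M, ∀ s μ, InSimplex μ → |V s μ| ≤ M) :
    ∃ M, ∀ s μ, InSimplex μ → |brPolicyBellman f g C γ α π V s μ| ≤ M := by
  obtain ⟨M, hM⟩ := hV
  refine ⟨(∑ s, ∑ a, ∑ ξ, |C s a ξ|) + γ * M, fun s μ hμ => ?_⟩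
  refine cvar_aux_abs hα0 hα1 hμ _ _ fun θ => ?_
  have hC : ∀ s a ξ, |C s a ξ| ≤ ∑ s, ∑ a, ∑ ξ, |C s a ξ| := fun s a ξ =>
    calc |C s a ξ| ≤ ∑ ξ, |C s a ξ| :=
          Finset.single_le_sum (f := fun ξ => |C s a ξ|) (fun _ _ => abs_nonneg _)
            (Finset.mem_univ ξ)
      _ ≤ ∑ a, ∑ ξ, |C s a ξ| :=
          Finset.single_le_sum (f := fun a => ∑ ξ, |C s a ξ|)
            (fun _ _ => Finset.sum_nonneg fun _ _ => abs_nonneg _) (Finset.mem_univ a)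
      _ ≤ _ :=
          Finset.single_le_sum (f := fun s => ∑ a, ∑ ξ, |C s a ξ|)
            (fun _ _ => Finset.sum_nonneg fun _ _ => Finset.sum_nonneg fun _ _ => abs_nonneg _)
            (Finset.mem_univ s)
  refine (Finset.abs_sum_le_sum_abs _ _).trans ?_
  set K := (∑ s, ∑ a, ∑ ξ, |C s a ξ|) with hK
  calc _ ≤ ∑ ξ, f θ ξ * (K + γ * M) := Finset.sum_le_sum fun ξ _ => by
        rw [abs_mul, abs_of_nonneg (hf0 θ ξ)]
        refine mul_le_mul_of_nonneg_left ?_ (hf0 θ ξ)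
        refine (abs_add_le _ _).trans (add_le_add (hC _ _ _) ?_)
        rw [abs_mul, abs_of_nonneg hγ0]
        exact mul_le_mul_of_nonneg_left (hM _ _ (bayes_aux f hf0 hμ ξ)) hγ0
    _ = _ := by rw [← Finset.sum_mul, hf1, one_mul]

lemma bellman_aux_exists [Fintype S] [Fintype A]
    (hf0 : ∀ θ ξ, 0 ≤ f θ ξ) (hf1 : ∀ θ, ∑ ξ, f θ ξ = 1)
    (hγ0 : 0 ≤ γ) (hγ1 : γ < 1) (hα0 : 0 ≤ α) (hα1 : α < 1) :
    ∃ Vpi : S → (Θ → ℝ) → ℝ,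
        (∃ M, ∀ s μ, InSimplex μ → |Vpi s μ| ≤ M) ∧
        (∀ s μ, InSimplex μ → brPolicyBellman f g C γ α π Vpi s μ = Vpi s μ) := by
  classical
  let X := S × {μ : Θ → ℝ // InSimplex μ}
  letI : TopologicalSpace X := ⊥
  haveI : DiscreteTopology X := ⟨rfl⟩
  let ext : (BoundedContinuousFunction X ℝ) → S → (Θ → ℝ) → ℝ := fun F s μ =>
    if h : InSimplex μ then F (s, ⟨μ, h⟩) else 0
  have hext : ∀ F s μ (h : InSimplex μ), ext F s μ = F (s, ⟨μ, h⟩) := fun F s μ h => dif_pos h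
  have hb : ∀ F, ∃ M, ∀ s μ, InSimplex μ → |ext F s μ| ≤ M := fun F =>
    ⟨‖F‖, fun s μ h => by rw [hext F s μ h]; exact F.norm_coe_le_norm _⟩
  have hTb := fun F => bellman_aux_bdd f g C γ α π hf0 hf1 hγ0 hα0 hα1 (ext F) (hb F)
  choose M hM using hTb
  let T : BoundedContinuousFunction X ℝ → BoundedContinuousFunction X ℝ := fun F =>
    BoundedContinuousFunction.ofNormedAddCommGroupDiscrete
      (fun x : X => brPolicyBellman f g C γ α π (ext F) x.1 x.2.1) (M F)
      (fun x => hM F x.1 x.2.1 x.2.2)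
  have hT : ContractingWith ⟨γ, hγ0⟩ T := by
    refine ⟨by exact_mod_cast hγ1, LipschitzWith.of_dist_le_mul fun F G => ?_⟩
    refine (BoundedContinuousFunction.dist_le (mul_nonneg hγ0 dist_nonneg)).2 fun x => ?_
    rw [Real.dist_eq]
    refine bellman_aux_abs f g C γ α π hf0 hf1 hγ0 hα0 hα1 (ext F) (ext G) (dist F G)
      (fun s μ h => ?_) x.1 x.2.1 x.2.2
    rw [hext F s μ h, hext G s μ h, ← Real.dist_eq]
    exact BoundedContinuousFunction.dist_coe_le_dist _
  refine ⟨ext hT.fixedPoint, hb _, fun s μ h => ?_⟩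
  have h1 : T hT.fixedPoint = hT.fixedPoint := hT.fixedPoint_isFixedPt
  rw [hext _ s μ h]
  exact congrArg (fun F : BoundedContinuousFunction X ℝ => F (s, ⟨μ, h⟩)) h1

end Aux

/-- The policy-evaluation Bellman operator `T^π` of the
infinite-horizon Bayesian risk MDP with CVaR risk measure under a stationary
policy `π` is a `γ`-contraction in the supremum norm over `S × Δ(Θ)` and admits
a unique bounded fixed point `V^π` (the value of the stationary policy `π`). -/
theorem brPolicyBellman_contraction_unique_fixed_point
    {S A Θ Ξ : Type*} [Fintype S] [Nonempty S] [Fintype A] [Nonempty A]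
    [Fintype Θ] [Nonempty Θ] [Fintype Ξ] [Nonempty Ξ]
    (f : Θ → Ξ → ℝ) (hf0 : ∀ θ ξ, 0 ≤ f θ ξ) (hf1 : ∀ θ, ∑ ξ, f θ ξ = 1)
    (g : S → A → Ξ → S) (C : S → A → Ξ → ℝ)
    (γ : ℝ) (hγ0 : 0 ≤ γ) (hγ1 : γ < 1)
    (α : ℝ) (hα0 : 0 ≤ α) (hα1 : α < 1)
    (π : S → (Θ → ℝ) → A) :
    (∀ V V' : S → (Θ → ℝ) → ℝ,
        (∃ M, ∀ s μ, InSimplex μ → |V s μ| ≤ M) →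
        (∃ M, ∀ s μ, InSimplex μ → |V' s μ| ≤ M) →
        (⨆ s, ⨆ μ : {μ : Θ → ℝ // InSimplex μ},
            |brPolicyBellman f g C γ α π V s μ.1 -
              brPolicyBellman f g C γ α π V' s μ.1|) ≤
          γ * ⨆ s, ⨆ μ : {μ : Θ → ℝ // InSimplex μ}, |V s μ.1 - V' s μ.1|) ∧
    (∃ Vpi : S → (Θ → ℝ) → ℝ,
        (∃ M, ∀ s μ, InSimplex μ → |Vpi s μ| ≤ M) ∧
        (∀ s μ, InSimplex μ → brPolicyBellman f g C γ α π Vpi s μ = Vpi s μ) ∧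
        (∀ V : S → (Θ → ℝ) → ℝ,
          (∃ M, ∀ s μ, InSimplex μ → |V s μ| ≤ M) →
          (∀ s μ, InSimplex μ → brPolicyBellman f g C γ α π V s μ = V s μ) →
          ∀ s μ, InSimplex μ → V s μ = Vpi s μ)) := by
  constructor
  · rintro V V' ⟨M, hM⟩ ⟨M', hM'⟩
    have hb : ∀ s (μ : {μ : Θ → ℝ // InSimplex μ}), |V s μ.1 - V' s μ.1| ≤ M + M' :=
      fun s μ => (abs_sub _ _).trans (add_le_add (hM s _ μ.2) (hM' s _ μ.2))
    have hD0 : 0 ≤ ⨆ s, ⨆ μ : {μ : Θ → ℝ // InSimplex μ}, |V s μ.1 - V' s μ.1| :=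
      Real.iSup_nonneg fun s => Real.iSup_nonneg fun μ => abs_nonneg _
    have hD : ∀ s μ, InSimplex μ → |V s μ - V' s μ| ≤
        ⨆ s, ⨆ μ : {μ : Θ → ℝ // InSimplex μ}, |V s μ.1 - V' s μ.1| := fun s μ h =>
      (le_ciSup (f := fun μ : {μ : Θ → ℝ // InSimplex μ} => |V s μ.1 - V' s μ.1|)
        ⟨M + M', by rintro _ ⟨ν, rfl⟩; exact hb s ν⟩ ⟨μ, h⟩).trans
      (le_ciSup (f := fun s => ⨆ μ : {μ : Θ → ℝ // InSimplex μ}, |V s μ.1 - V' s μ.1|)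
        (Set.finite_range _).bddAbove s)
    exact Real.iSup_le (fun s => Real.iSup_le (fun μ =>
      bellman_aux_abs f g C γ α π hf0 hf1 hγ0 hα0 hα1 V V' _ hD s μ.1 μ.2)
      (mul_nonneg hγ0 hD0)) (mul_nonneg hγ0 hD0)
  · obtain ⟨W, ⟨M', hM'⟩, hW⟩ :=
      bellman_aux_exists f g C γ α π hf0 hf1 hγ0 hγ1 hα0 hα1
    refine ⟨W, ⟨M', hM'⟩, hW, ?_⟩
    rintro V ⟨M, hM⟩ hV s μ hμ
    have key : ∀ n : ℕ, ∀ s μ, InSimplex μ → |V s μ - W s μ| ≤ γ ^ n * (M + M') := by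
      intro n
      induction n with
      | zero =>
        intro s μ h
        simpa using (abs_sub _ _).trans (add_le_add (hM s _ h) (hM' s _ h))
      | succ n ih =>
        intro s μ h
        have := bellman_aux_abs f g C γ α π hf0 hf1 hγ0 hα0 hα1 V W _ ih s μ h
        rw [hV s μ h, hW s μ h] at this
        rw [pow_succ']
        linarith
    have hl : Filter.Tendsto (fun n : ℕ => γ ^ n * (M + M')) Filter.atTop (nhds 0) := by
      simpa using (tendsto_pow_atTop_nhds_zero_of_lt_one hγ0 hγ1).mul_const (M + M')
    have h0 := ge_of_tendsto' hl fun n => key n s μ hμ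
    exact sub_eq_zero.1 (abs_nonpos_iff.1 h0)

end
end

section
/- Let X be a finite nonempty set, T a monotone γ-contraction on real-valued functions on X with fixed point V*, and α : X → ℝ with α(x) > 0 for all x and Σ_x α(x) = 1. Then V* is the unique optimal solution of the program max_V Σ_x α(x)·V(x) subject to V(x) ≤ (T V)(x) for all x ∈ X: every feasible V satisfies Σ_x α(x)·V(x) ≤ Σ_x α(x)·V*(x), V* itself is feasible, and any feasible V attaining Σ_x α(x)·V(x) = Σ_x α(x)·V*(x) equals V*. -/
/-- On a finite nonempty state space `X`, with `T` a monotone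
`γ`-contraction with fixed point `V*` and strictly positive weights `α`
summing to one, `V*` is the unique optimal solution of the program
`max_V Σ_x α(x)·V(x)` subject to `V ≤ T V` pointwise: every feasible `V` has
weighted sum at most that of `V*`, `V*` itself is feasible, and any feasible
`V` attaining the optimal weighted sum equals `V*`. -/
theorem fixed_point_unique_lp_solution {X : Type*} [Fintype X] [Nonempty X]
    (T : (X → ℝ) → (X → ℝ)) (γ : ℝ) (hγ0 : 0 ≤ γ) (hγ1 : γ < 1)
    (hmono : ∀ V V' : X → ℝ, (∀ x, V x ≤ V' x) → ∀ x, T V x ≤ T V' x)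
    (hcontract : ∀ V V' : X → ℝ,
      (⨆ x, |T V x - T V' x|) ≤ γ * ⨆ x, |V x - V' x|)
    (Vstar : X → ℝ) (hfix : T Vstar = Vstar)
    (α : X → ℝ) (hα0 : ∀ x, 0 < α x) (hα1 : ∑ x, α x = 1) :
    (∀ V : X → ℝ, (∀ x, V x ≤ T V x) → ∑ x, α x * V x ≤ ∑ x, α x * Vstar x) ∧
    (∀ x, Vstar x ≤ T Vstar x) ∧
    (∀ V : X → ℝ, (∀ x, V x ≤ T V x) →
      ∑ x, α x * V x = ∑ x, α x * Vstar x → V = Vstar) := by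
  have key : ∀ V : X → ℝ, (∀ x, V x ≤ T V x) → ∀ x, V x ≤ Vstar x := by
    intro V hV
    let W : X → ℝ := fun x => max (V x) (Vstar x)
    have hW : ∀ x, W x ≤ T W x := fun x => max_le
      ((hV x).trans (hmono V W (fun y => le_max_left _ _) x))
      (by
        have h := hmono Vstar W (fun y => le_max_right _ _) x
        rwa [hfix] at h)
    have hWs : ∀ x, Vstar x ≤ W x := fun x => le_max_right _ _
    have h1 := hcontract W Vstar
    rw [hfix] at h1
    have h2 : (⨆ x, |W x - Vstar x|) ≤ ⨆ x, |T W x - Vstar x| := by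
      apply ciSup_mono (Set.finite_range _).bddAbove
      intro x
      apply abs_le_abs_of_nonneg
      · linarith [hWs x]
      · linarith [hW x]
    have h3 : (⨆ x, |W x - Vstar x|) ≤ 0 := by
      by_contra h
      push Not at h
      nlinarith
    intro x
    have h4 : |W x - Vstar x| ≤ ⨆ x, |W x - Vstar x| :=
      le_ciSup (f := fun x => |W x - Vstar x|) (Set.finite_range _).bddAbove x
    have h5 := le_abs_self (W x - Vstar x)
    have h6 : V x ≤ W x := le_max_left _ _
    linarith
  refine ⟨fun V hV => Finset.sum_le_sum fun x _ =>
    mul_le_mul_of_nonneg_left (key V hV x) (hα0 x).le, fun x => by rw [hfix], ?_⟩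
  intro V hV he
  have h := (Finset.sum_eq_sum_iff_of_le (fun x _ =>
    mul_le_mul_of_nonneg_left (key V hV x) (hα0 x).le)).1 he
  funext x
  exact mul_left_cancel₀ (hα0 x).ne' (h x (Finset.mem_univ x))
end

section
/- Consider the infinite-horizon Bayesian risk MDP with CVaR risk measure, with exact Bellman operator T on bounded functions V : S × Δ(Θ) → ℝ given by (T V)(s,μ) = min_{a ∈ A} ρ_μ(θ ↦ Σ_ξ f(θ,ξ)·(C(s,a,ξ) + γ·V(g(s,a,ξ), B(μ,ξ)))) and unique bounded fixed point V*. Let M̂ ⊆ Δ(Θ) be a finite nonempty subset, and suppose interpolation weights are given: for every s ∈ S, a ∈ A, ξ ∈ Ξ, μ ∈ M̂ there is w_{s,a,ξ,μ} : M̂ → ℝ with w_{s,a,ξ,μ}(μ') ≥ 0, Σ_{μ' ∈ M̂} w_{s,a,ξ,μ}(μ') = 1, and Σ_{μ' ∈ M̂} w_{s,a,ξ,μ}(μ')·μ'(θ) = B(μ,ξ)(θ) for all θ ∈ Θ. Define the approximate Bellman operator T̂ on functions V : S × M̂ → ℝ by (T̂ V)(s,μ) = min_{a ∈ A} ρ_μ(θ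 ↦ Σ_ξ f(θ,ξ)·(C(s,a,ξ) + γ·Σ_{μ' ∈ M̂} w_{s,a,ξ,μ}(μ')·V(g(s,a,ξ),μ'))), and let V̂* be its unique fixed point. If for every s ∈ S the map μ ↦ V*(s,μ) is concave on Δ(Θ), then V̂*(s,μ) ≤ V*(s,μ) for every s ∈ S and μ ∈ M̂; that is, the approximate optimal value function is a lower bound on the exact optimal value function. -/
open scoped BigOperators

noncomputable section

/-- The approximate Bellman operator in which the Bayes update is replaced by
an interpolation, with weights `w`, over a finite belief set `Mhat`. -/
def brApproxBellman {S A Θ Ξ : Type*} [Fintype Θ] [Fintype Ξ] [Fintype A]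
    [Nonempty A]
    (f : Θ → Ξ → ℝ) (g : S → A → Ξ → S) (C : S → A → Ξ → ℝ) (γ α : ℝ)
    (Mhat : Finset (Θ → ℝ)) (w : S → A → Ξ → (Θ → ℝ) → (Θ → ℝ) → ℝ)
    (V : S → (Θ → ℝ) → ℝ) : S → (Θ → ℝ) → ℝ :=
  fun s μ => ⨅ a : A, cvarRisk α μ (fun θ =>
    ∑ ξ, f θ ξ * (C s a ξ + γ * ∑ μ' ∈ Mhat, w s a ξ μ μ' * V (g s a ξ) μ'))

theorem cvar_le_aux {Θ : Type*} [Fintype Θ] (α : ℝ) (hα0 : 0 ≤ α) (hα1 : α < 1)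
    (μ : Θ → ℝ) (hμ : InSimplex μ) (Z₁ Z₂ : Θ → ℝ) (c : ℝ) (h : ∀ θ, Z₁ θ ≤ Z₂ θ + c) :
    cvarRisk α μ Z₁ ≤ cvarRisk α μ Z₂ + c := by
  have hk0 : 0 < 1 - α := by linarith
  have hk : 1 ≤ (1 - α)⁻¹ := (one_le_inv₀ hk0).2 (by linarith)
  have hbdd : BddBelow (Set.range fun φ : ℝ =>
      φ + (1 - α)⁻¹ * ∑ θ, μ θ * max (Z₁ θ - φ) 0) := by
    refine ⟨∑ θ, μ θ * Z₁ θ, ?_⟩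
    rintro _ ⟨φ, rfl⟩
    have h0 : 0 ≤ ∑ θ, μ θ * max (Z₁ θ - φ) 0 :=
      Finset.sum_nonneg fun θ _ => mul_nonneg (hμ.1 θ) (le_max_right _ _)
    have h1 : ∑ θ, μ θ * (Z₁ θ - φ) ≤ ∑ θ, μ θ * max (Z₁ θ - φ) 0 :=
      Finset.sum_le_sum fun θ _ => mul_le_mul_of_nonneg_left (le_max_left _ _) (hμ.1 θ)
    have h2 : ∑ θ, μ θ * (Z₁ θ - φ) = ∑ θ, μ θ * Z₁ θ - φ := by
      simp only [mul_sub, Finset.sum_sub_distrib, ← Finset.sum_mul, hμ.2, one_mul]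
    have h3 := mul_le_mul_of_nonneg_right hk h0
    dsimp only
    linarith
  rw [← sub_le_iff_le_add]
  unfold cvarRisk
  refine le_ciInf fun φ => ?_
  have h1 := ciInf_le hbdd (φ + c)
  have h2 : ∑ θ, μ θ * max (Z₁ θ - (φ + c)) 0 ≤ ∑ θ, μ θ * max (Z₂ θ - φ) 0 :=
    Finset.sum_le_sum fun θ _ => mul_le_mul_of_nonneg_left
      (max_le_max (by linarith [h θ]) le_rfl) (hμ.1 θ)
  have h3 := mul_le_mul_of_nonneg_left h2 (zero_le_one.trans hk)
  linarith

/-- If the exact optimal value function `V*` (the unique bounded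
fixed point of the exact Bellman operator) is concave in the belief, and the
interpolation weights are nonnegative, sum to one, and reproduce the Bayes
update as a convex combination of beliefs in the finite set `Mhat`, then the
fixed point `V̂*` of the approximate Bellman operator is a lower bound on `V*`
on `Mhat`. -/
theorem approx_value_lower_bound
    {S A Θ Ξ : Type*} [Fintype S] [Nonempty S] [Fintype A] [Nonempty A]
    [Fintype Θ] [Nonempty Θ] [Fintype Ξ] [Nonempty Ξ]
    (f : Θ → Ξ → ℝ) (hf0 : ∀ θ ξ, 0 ≤ f θ ξ) (hf1 : ∀ θ, ∑ ξ, f θ ξ = 1)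
    (g : S → A → Ξ → S) (C : S → A → Ξ → ℝ)
    (γ : ℝ) (hγ0 : 0 ≤ γ) (hγ1 : γ < 1)
    (α : ℝ) (hα0 : 0 ≤ α) (hα1 : α < 1)
    (Mhat : Finset (Θ → ℝ)) (hMne : Mhat.Nonempty)
    (hMsub : ∀ μ ∈ Mhat, InSimplex μ)
    (w : S → A → Ξ → (Θ → ℝ) → (Θ → ℝ) → ℝ)
    (hw0 : ∀ s a ξ, ∀ μ ∈ Mhat, ∀ μ' ∈ Mhat, 0 ≤ w s a ξ μ μ')
    (hw1 : ∀ s a ξ, ∀ μ ∈ Mhat, ∑ μ' ∈ Mhat, w s a ξ μ μ' = 1)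
    (hwB : ∀ s a ξ, ∀ μ ∈ Mhat, ∀ θ,
      ∑ μ' ∈ Mhat, w s a ξ μ μ' * μ' θ = bayesUpdate f μ ξ θ)
    (Vstar : S → (Θ → ℝ) → ℝ)
    (hVstarBdd : ∃ M, ∀ s μ, InSimplex μ → |Vstar s μ| ≤ M)
    (hVstarFix : ∀ s μ, InSimplex μ → brBellman f g C γ α Vstar s μ = Vstar s μ)
    (hVstarConcave : ∀ s (μ₁ μ₂ : Θ → ℝ), InSimplex μ₁ → InSimplex μ₂ →
      ∀ t : ℝ, 0 ≤ t → t ≤ 1 →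
        t * Vstar s μ₁ + (1 - t) * Vstar s μ₂ ≤
          Vstar s (fun θ => t * μ₁ θ + (1 - t) * μ₂ θ))
    (Vhat : S → (Θ → ℝ) → ℝ)
    (hVhatFix : ∀ s, ∀ μ ∈ Mhat,
      brApproxBellman f g C γ α Mhat w Vhat s μ = Vhat s μ) :
    ∀ s, ∀ μ ∈ Mhat, Vhat s μ ≤ Vstar s μ := by
  have hconv : Convex ℝ {μ : Θ → ℝ | InSimplex μ} := by
    have : {μ : Θ → ℝ | InSimplex μ} = stdSimplex ℝ Θ := rfl
    rw [this]
    exact convex_stdSimplex ℝ Θ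
  have hconc : ∀ s, ConcaveOn ℝ {μ : Θ → ℝ | InSimplex μ} (Vstar s) := by
    intro s
    refine ⟨hconv, ?_⟩
    intro x hx y hy a b ha hb hab
    have hb' : b = 1 - a := by linarith
    subst hb'
    exact hVstarConcave s x y hx hy a ha (by linarith)
  obtain ⟨p, hp, hmax⟩ := Finset.exists_max_image
    ((Finset.univ : Finset S) ×ˢ Mhat) (fun p => Vhat p.1 p.2 - Vstar p.1 p.2)
    (Finset.univ_nonempty.product hMne)
  obtain ⟨s₀, μ₀⟩ := p
  have hμ₀ : μ₀ ∈ Mhat := (Finset.mem_product.1 hp).2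
  set d := Vhat s₀ μ₀ - Vstar s₀ μ₀ with hd
  have hle : ∀ s, ∀ μ ∈ Mhat, Vhat s μ ≤ Vstar s μ + d := by
    intro s μ hμ
    have := hmax (s, μ) (Finset.mem_product.2 ⟨Finset.mem_univ _, hμ⟩)
    dsimp only at this
    linarith
  have key : Vhat s₀ μ₀ ≤ Vstar s₀ μ₀ + γ * d := by
    rw [← hVhatFix s₀ μ₀ hμ₀, ← hVstarFix s₀ μ₀ (hMsub _ hμ₀), ← sub_le_iff_le_add]
    unfold brApproxBellman brBellman
    refine le_ciInf fun a => ?_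
    rw [sub_le_iff_le_add]
    refine (ciInf_le (Set.finite_range _).bddBelow a).trans ?_
    refine cvar_le_aux α hα0 hα1 μ₀ (hMsub _ hμ₀) _ _ _ fun θ => ?_
    have hs : ∑ ξ, f θ ξ * (C s₀ a ξ + γ * Vstar (g s₀ a ξ) (bayesUpdate f μ₀ ξ)) + γ * d
        = ∑ ξ, f θ ξ *
          (C s₀ a ξ + γ * (Vstar (g s₀ a ξ) (bayesUpdate f μ₀ ξ) + d)) := by
      have : γ * d = ∑ ξ, f θ ξ * (γ * d) := by rw [← Finset.sum_mul, hf1, one_mul]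
      rw [this, ← Finset.sum_add_distrib]
      exact Finset.sum_congr rfl fun ξ _ => by ring
    rw [hs]
    refine Finset.sum_le_sum fun ξ _ => mul_le_mul_of_nonneg_left ?_ (hf0 θ ξ)
    refine add_le_add le_rfl (mul_le_mul_of_nonneg_left ?_ hγ0)
    have hB : ∑ μ' ∈ Mhat, w s₀ a ξ μ₀ μ' • μ' = bayesUpdate f μ₀ ξ := by
      funext θ'
      rw [← hwB s₀ a ξ μ₀ hμ₀ θ']
      simp [Finset.sum_apply]
    have hJ := (hconc (g s₀ a ξ)).le_map_sum (t := Mhat) (w := w s₀ a ξ μ₀)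
      (p := fun μ' => μ') (hw0 s₀ a ξ μ₀ hμ₀) (hw1 s₀ a ξ μ₀ hμ₀) hMsub
    rw [hB] at hJ
    simp only [smul_eq_mul] at hJ
    have h1 : ∑ μ' ∈ Mhat, w s₀ a ξ μ₀ μ' * Vhat (g s₀ a ξ) μ' ≤
        ∑ μ' ∈ Mhat, w s₀ a ξ μ₀ μ' * (Vstar (g s₀ a ξ) μ' + d) :=
      Finset.sum_le_sum fun μ' h => mul_le_mul_of_nonneg_left (hle _ _ h)
        (hw0 s₀ a ξ μ₀ hμ₀ μ' h)
    simp only [mul_add, Finset.sum_add_distrib, ← Finset.sum_mul,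
      hw1 s₀ a ξ μ₀ hμ₀, one_mul] at h1
    linarith
  have hd0 : d ≤ 0 := by
    by_contra hcon
    push Not at hcon
    nlinarith
  intro s μ hμ
  linarith [hle s μ hμ]

end
end

section
/- Conditional value-at-risk is convex: for integrable random variables X, Y on a probability space, any t ∈ [0,1], and any risk level α ∈ [0,1), CVaR_α(t·X + (1−t)·Y) ≤ t·CVaR_α(X) + (1−t)·CVaR_α(Y), where CVaR_α(X) = inf_{φ ∈ ℝ} (φ + (1−α)^{-1}·𝔼[max(X − φ, 0)]). -/
open MeasureTheory

/-- The conditional value-at-risk at level `α` of a random variable `X` under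
the probability measure `P`, via the Rockafellar–Uryasev formula. -/
noncomputable def CVaR {Ω : Type*} [MeasurableSpace Ω] (P : Measure Ω)
    (α : ℝ) (X : Ω → ℝ) : ℝ :=
  ⨅ φ : ℝ, φ + (1 - α)⁻¹ * ∫ ω, max (X ω - φ) 0 ∂P

theorem cvar_aux_int {Ω : Type*} [MeasurableSpace Ω] (P : Measure Ω)
    [IsProbabilityMeasure P] (X : Ω → ℝ) (hX : Integrable X P) (φ : ℝ) :
    Integrable (fun ω => max (X ω - φ) 0) P :=
  (hX.sub (integrable_const φ)).pos_part

theorem cvar_aux_bdd_s17 {Ω : Type*} [MeasurableSpace Ω] (P : Measure Ω)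
    [IsProbabilityMeasure P]
    (α : ℝ) (hα0 : 0 ≤ α) (hα1 : α < 1) (X : Ω → ℝ) (hX : Integrable X P) :
    BddBelow (Set.range fun φ : ℝ => φ + (1 - α)⁻¹ * ∫ ω, max (X ω - φ) 0 ∂P) := by
  refine ⟨∫ ω, X ω ∂P, ?_⟩
  rintro _ ⟨φ, rfl⟩
  have hc : 1 ≤ (1 - α)⁻¹ := (one_le_inv₀ (by linarith)).2 (by linarith)
  have h0 : 0 ≤ ∫ ω, max (X ω - φ) 0 ∂P := integral_nonneg fun ω => le_max_right _ _
  have h1 : ∫ ω, (X ω - φ) ∂P ≤ ∫ ω, max (X ω - φ) 0 ∂P :=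
    integral_mono (hX.sub (integrable_const φ)) (cvar_aux_int P X hX φ)
      fun ω => le_max_left _ _
  rw [integral_sub hX (integrable_const φ)] at h1
  simp at h1
  simp only
  nlinarith

/-- CVaR is convex:
`CVaR_α(t·X + (1−t)·Y) ≤ t·CVaR_α(X) + (1−t)·CVaR_α(Y)` for integrable `X, Y`,
`t ∈ [0,1]` and risk level `α ∈ [0,1)`. -/
theorem cvar_convex {Ω : Type*} [MeasurableSpace Ω] (P : Measure Ω)
    [IsProbabilityMeasure P]
    (α : ℝ) (hα0 : 0 ≤ α) (hα1 : α < 1)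
    (X Y : Ω → ℝ) (hX : Integrable X P) (hY : Integrable Y P)
    (t : ℝ) (ht0 : 0 ≤ t) (ht1 : t ≤ 1) :
    CVaR P α (fun ω => t * X ω + (1 - t) * Y ω) ≤
      t * CVaR P α X + (1 - t) * CVaR P α Y := by
  have ht1' : 0 ≤ 1 - t := by linarith
  have hc : 0 ≤ (1 - α)⁻¹ := inv_nonneg.2 (by linarith)
  have hZ : Integrable (fun ω => t * X ω + (1 - t) * Y ω) P :=
    (hX.const_mul t).add (hY.const_mul (1 - t))
  unfold CVaR
  rw [Real.mul_iInf_of_nonneg ht0, Real.mul_iInf_of_nonneg ht1']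
  refine le_ciInf_add_ciInf fun a b => ?_
  refine (ciInf_le (cvar_aux_bdd_s17 P α hα0 hα1 _ hZ) (t * a + (1 - t) * b)).trans ?_
  have iX := (cvar_aux_int P X hX a).const_mul t
  have iY := (cvar_aux_int P Y hY b).const_mul (1 - t)
  have key : ∫ ω, max (t * X ω + (1 - t) * Y ω - (t * a + (1 - t) * b)) 0 ∂P ≤
      t * ∫ ω, max (X ω - a) 0 ∂P + (1 - t) * ∫ ω, max (Y ω - b) 0 ∂P := by
    rw [← integral_const_mul, ← integral_const_mul, ← integral_add iX iY]
    refine integral_mono (cvar_aux_int P _ hZ _) (iX.add iY) fun ω => ?_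
    have h1 := mul_le_mul_of_nonneg_left (le_max_left (X ω - a) 0) ht0
    have h2 := mul_le_mul_of_nonneg_left (le_max_left (Y ω - b) 0) ht1'
    have h3 := mul_nonneg ht0 (le_max_right (X ω - a) 0)
    have h4 := mul_nonneg ht1' (le_max_right (Y ω - b) 0)
    exact max_le (by simp only; linarith) (by simp only; linarith)
  have := mul_le_mul_of_nonneg_left key hc
  linarith
end
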